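/- For every positive integer n, the determinant of the 2n×2n matrix whose (i,j) entry is (j−i)·D_{i+j−3} for 1 ≤ i,j ≤ 2n (with the convention that the (1,1) entry, whose factor j−i vanishes, is 0) equals (2^{(n+1)(n−1)}·(2n−1)·∏_{k=1}^{n−1} (4k−1))². -/

import Mathlib

/-- The `n`-th central Delannoy number `D_n = ∑_{k=0}^{n} C(n,k)·C(n+k,k)`. -/
def delannoy (n : ℕ) : ℚ :=
  ∑ k ∈ Finset.range (n + 1), (n.choose k : ℚ) * ((n + k).choose k)

/-!
The central Delannoy numbers are the central coefficients of `(X ^ 2 + 3 * X + 2) ^ n`, and the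
argument works for the central coefficients of `(X ^ 2 + b * X + a) ^ n`, with `a` and `b` in any
commutative ring. These are the values `L ((X + b) ^ n)` of the functional `L` sending `f` to the
constant term of `f (z + a / z)`. Hence `(j - i) * L ((X + b) ^ (i + j - 1))` is the Gram matrix of
the alternating form `L (f * g' - f' * g)` at the powers of `X + b`, and its determinant does not
change when these are replaced by other monic polynomials of the same degrees. The Dickson
polynomials `D i`, for which `D i (z + a / z) = z ^ i + (a / z) ^ i`, are a good choice: the form
vanishes on `D i` and `D j` when `i + j` is even, so the determinant is the square of that of the
even-odd block. Up to factors in its rows and columns, that block has entries `2 * q + 1` for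
`p ≤ q` and `-2 * p` for `q < p`, and it is triangularised by subtracting consecutive rows.
-/

open Polynomial

section Determinants

variable {R : Type*} [CommRing R]

theorem det_of_ite_le (u v : ℕ → R) (n : ℕ) :
    (Matrix.of fun p q : Fin (n + 1) => if p ≤ q then u q else v p).det =
      (∏ k ∈ Finset.range n, (u k - v (k + 1))) * u n := by
  induction n generalizing u v with
  | zero => simp
  | succ n ih =>
    set B : Matrix (Fin (n + 2)) (Fin (n + 2)) R :=
      Matrix.of (Fin.cons (Pi.single 0 (u 0 - v 1))
        fun p q => if p.succ ≤ q then u q else v (p + 1))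
    have minor : B.submatrix Fin.succ Fin.succ =
        Matrix.of fun p q : Fin (n + 1) => if p ≤ q then u (q + 1) else v (p + 1) := by
      ext p q
      simp [B]
    calc (Matrix.of fun p q : Fin (n + 2) => if p ≤ q then u q else v p).det
      _ = B.det := by
        refine Matrix.det_eq_of_forall_row_eq_smul_add_const (Pi.single 0 1) 1 (by simp) ?_
        intro p q
        obtain rfl | ⟨p, rfl⟩ := p.eq_zero_or_eq_succ <;>
          obtain rfl | ⟨q, rfl⟩ := q.eq_zero_or_eq_succ <;>
          simp [B]
      _ = (u 0 - v 1) * (B.submatrix Fin.succ Fin.succ).det := by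
        rw [Matrix.det_succ_row_zero,
          Finset.sum_eq_single 0 (by simp +contextual [B]) (by simp)]
        simp [B]
      _ = (∏ k ∈ Finset.range (n + 1), (u k - v (k + 1))) * u (n + 1) := by
        rw [minor, ih (fun k => u (k + 1)) (fun k => v (k + 1)), Finset.prod_range_succ', zero_add]
        ring

theorem det_fromBlocks_zero_neg_transpose {ι : Type*} [Fintype ι] [DecidableEq ι]
    (B : Matrix ι ι R) : (Matrix.fromBlocks 0 B (-B.transpose) 0).det = B.det ^ 2 := by
  have factor : Matrix.fromBlocks 0 B (-B.transpose) 0 =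
      Matrix.fromBlocks B 0 0 B.transpose *
        (Matrix.fromBlocks 1 1 (-1) 0 * Matrix.fromBlocks 1 0 (-1) 1) := by
    simp [Matrix.fromBlocks_multiply]
  rw [factor, Matrix.det_mul, Matrix.det_mul, Matrix.det_fromBlocks_zero₂₁,
    Matrix.det_fromBlocks_one₁₁, Matrix.det_fromBlocks_zero₁₂, Matrix.det_transpose]
  simp [sq]

/-- The enumeration of `Fin (2 * n)` by its even elements `2 * p`, in the left summand, followed
by its odd elements `2 * p + 1`, in the right summand. -/
def evenOddEquiv (n : ℕ) : Fin n ⊕ Fin n ≃ Fin (2 * n) where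
  toFun := Sum.elim (fun p => ⟨2 * p, by omega⟩) (fun p => ⟨2 * p + 1, by omega⟩)
  invFun i := if i.val % 2 = 0 then .inl ⟨i / 2, by omega⟩ else .inr ⟨i / 2, by omega⟩
  left_inv := by
    rintro (p | p) <;> simp [Nat.add_mod, Nat.mul_add_div]
  right_inv i := by
    rcases Nat.mod_two_eq_zero_or_one i with h | h <;> ext <;> simp [h] <;> omega

theorem det_eq_sq_of_skew_of_eq_zero_of_even_add (M : ℕ → ℕ → R) (skew : ∀ i j, M j i = -M i j)
    (zero : ∀ i j, Even (i + j) → M i j = 0) (n : ℕ) :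
    (Matrix.of fun i j : Fin (2 * n) => M i j).det =
      (Matrix.of fun p q : Fin n => M (2 * p) (2 * q + 1)).det ^ 2 := by
  rw [← det_fromBlocks_zero_neg_transpose, ← Matrix.det_submatrix_equiv_self (evenOddEquiv n)]
  congr 1
  ext (p | p) (q | q)
  · exact zero _ _ (by simp [evenOddEquiv, parity_simps])
  · rfl
  · exact skew _ _
  · exact zero _ _ (by simp [evenOddEquiv, parity_simps])

theorem det_bilin_eq_det_bilin_X_pow (B : R[X] →ₗ[R] R[X] →ₗ[R] R) (p : ℕ → R[X])
    (natDegree_eq : ∀ i, (p i).natDegree = i) (monic : ∀ i, (p i).Monic) (n : ℕ) :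
    (Matrix.of fun i j : Fin n => B (p i) (p j)).det =
      (Matrix.of fun i j : Fin n => B (X ^ (i : ℕ)) (X ^ (j : ℕ))).det := by
  set P : Matrix (Fin n) (Fin n) R := Matrix.of fun i j => (p j).coeff i
  set G : Matrix (Fin n) (Fin n) R := Matrix.of fun i j => B (X ^ (i : ℕ)) (X ^ (j : ℕ))
  have det_P : P.det = 1 :=
    Matrix.det_matrixOfPolynomials (fun i : Fin n => p i) (fun i => natDegree_eq i)
      (fun i => monic i)
  have expand (i : Fin n) : p i = ∑ k : Fin n, P k i • X ^ (k : ℕ) := by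
    rw [as_sum_range' (p i) n (by rw [natDegree_eq]; exact i.isLt),
      ← Fin.sum_univ_eq_sum_range (fun k => monomial k ((p i).coeff k)) n]
    simp [P, smul_X_eq_monomial]
  have change_basis : (Matrix.of fun i j : Fin n => B (p i) (p j)) = P.transpose * G * P := by
    ext i j
    rw [Matrix.of_apply, expand i, expand j]
    simp [Matrix.mul_apply, G, mul_comm]
  rw [change_basis, Matrix.det_mul, Matrix.det_mul, Matrix.det_transpose, det_P, one_mul, mul_one]

end Determinants

section Dickson

variable {R : Type*} [CommRing R] (a : R)

theorem dickson_one_add_two_eq_sub (n : ℕ) :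
    dickson 1 a (n + 2) = dickson 2 a (n + 2) - C a * dickson 2 a n := by
  induction n using Nat.twoStepInduction with
  | zero =>
    simp only [zero_add, dickson_add_two, dickson_one, dickson_zero, Nat.cast_one, Nat.cast_ofNat]
    ring
  | one =>
    simp only [Nat.reduceAdd, dickson_add_two, zero_add, dickson_one, dickson_zero, Nat.cast_one,
      Nat.cast_ofNat, sub_left_inj]
    ring
  | more n ih₀ ih₁ =>
    rw [dickson_add_two, ih₀, ih₁, dickson_add_two 2 a (n + 2), dickson_add_two 2 a (n + 1),
      dickson_add_two 2 a n]
    ring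

theorem derivative_dickson_one_succ (n : ℕ) :
    derivative (dickson 1 a (n + 1)) = (n + 1) • dickson 2 a n := by
  simp only [nsmul_eq_mul]
  induction n using Nat.twoStepInduction with
  | zero =>
    simp only [zero_add, dickson_one, derivative_X, Nat.cast_one, dickson_zero, Nat.cast_ofNat,
      one_mul]
    ring
  | one =>
    simp only [Nat.reduceAdd, dickson_add_two, zero_add, dickson_one, dickson_zero, Nat.cast_one,
      derivative_sub, derivative_mul, derivative_X, derivative_C, derivative_ofNat, derivative_one,
      one_mul, mul_one, zero_mul, mul_zero, sub_self, add_zero, sub_zero, Nat.cast_ofNat]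
    ring
  | more n ih₀ ih₁ =>
    rw [dickson_add_two, derivative_sub, derivative_mul, derivative_C_mul, ih₀, ih₁, derivative_X,
      dickson_one_add_two_eq_sub, dickson_add_two 2 a n]
    push_cast
    ring

theorem dickson_one_mul_dickson_two_add (i d : ℕ) :
    dickson 1 a i * dickson 2 a (i + d) = dickson 2 a (2 * i + d) + C a ^ i * dickson 2 a d := by
  induction i using Nat.twoStepInduction generalizing d with
  | zero =>
    simp only [dickson_zero, Nat.cast_one, zero_add, mul_zero, pow_zero, one_mul]
    ring
  | one => rw [show 1 + d = d + 1 by ring, show 2 * 1 + d = d + 2 by ring]; simp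
  | more i ih₀ ih₁ =>
    have h₀ := ih₀ (d + 2)
    have h₁ := ih₁ (d + 1)
    rw [show i + (d + 2) = i + 2 + d by ring] at h₀
    rw [show i + 1 + (d + 1) = i + 2 + d by ring] at h₁
    rw [show 2 * (i + 2) + d = 2 * i + (d + 2) + 2 by ring, dickson_add_two 1 a i,
      dickson_add_two 2 a (2 * i + (d + 2)), sub_mul, mul_assoc, mul_assoc, h₀, h₁,
      show 2 * (i + 1) + (d + 1) = 2 * i + (d + 2) + 1 by ring, dickson_add_two 2 a d]
    ring

theorem dickson_one_add_mul_dickson_two (i d : ℕ) :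
    dickson 1 a (i + d + 2) * dickson 2 a i =
      dickson 2 a (2 * i + d + 2) - C a ^ (i + 1) * dickson 2 a d := by
  induction i using Nat.twoStepInduction generalizing d with
  | zero =>
    simp only [zero_add, mul_zero, dickson_one_add_two_eq_sub, dickson_zero]
    push_cast
    ring
  | one =>
    rw [show 1 + d + 2 = d + 1 + 2 by ring, dickson_one_add_two_eq_sub,
      show 2 * 1 + d + 2 = d + 2 + 2 by ring]
    simp only [dickson_one, dickson_add_two]
    ring
  | more i ih₀ ih₁ =>
    have h₀ := ih₀ (d + 2)
    have h₁ := ih₁ (d + 1)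
    rw [show i + (d + 2) + 2 = i + 2 + d + 2 by ring] at h₀
    rw [show i + 1 + (d + 1) + 2 = i + 2 + d + 2 by ring] at h₁
    rw [show 2 * (i + 2) + d + 2 = 2 * i + (d + 2) + 2 + 2 by ring, dickson_add_two 2 a i,
      dickson_add_two 2 a (2 * i + (d + 2) + 2), mul_sub, mul_left_comm, mul_left_comm _ (C a),
      h₀, h₁, show 2 * (i + 1) + (d + 1) + 2 = 2 * i + (d + 2) + 2 + 1 by ring,
      dickson_add_two 2 a d]
    ring

theorem wronskian_dickson_one (i d : ℕ) :
    wronskian (dickson 1 a i) (dickson 1 a (i + d + 1)) =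
      (d + 1) • dickson 2 a (2 * i + d) + (2 * i + d + 1) • a ^ i • dickson 2 a d := by
  rw [wronskian, derivative_dickson_one_succ, mul_smul_comm, dickson_one_mul_dickson_two_add]
  simp only [nsmul_eq_mul, smul_eq_C_mul, C_pow]
  cases i with
  | zero =>
    simp only [zero_add, Nat.cast_add, Nat.cast_one, mul_zero, pow_zero, one_mul, dickson_zero,
      derivative_sub, derivative_ofNat, derivative_one, sub_self, zero_mul, sub_zero]
    ring
  | succ i =>
    rw [derivative_dickson_one_succ, nsmul_eq_mul, show i + 1 + d + 1 = i + d + 2 by ring,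
      show 2 * (i + 1) + d = 2 * i + d + 2 by ring, mul_assoc _ (dickson 2 a i),
      mul_comm (dickson 2 a i), dickson_one_add_mul_dickson_two]
    push_cast
    ring

theorem aeval_add_dickson_one {A : Type*} [CommRing A] [Algebra R A] {x y : A}
    (h : x * y = algebraMap R A a) (n : ℕ) : aeval (x + y) (dickson 1 a n) = x ^ n + y ^ n := by
  induction n using Nat.twoStepInduction with
  | zero =>
    simp only [dickson_zero, map_sub, map_ofNat, map_natCast, pow_zero]
    norm_num
  | one => simp
  | more n ih₀ ih₁ =>
    rw [dickson_add_two, map_sub, map_mul, map_mul, ih₀, ih₁, aeval_X, aeval_C, ← h]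
    ring

theorem natDegree_dickson_le (k n : ℕ) : (dickson k a n).natDegree ≤ n := by
  induction n using Nat.twoStepInduction with
  | zero =>
    rw [dickson_zero, ← C_ofNat, ← map_natCast C, ← C_sub, natDegree_C]
  | one => exact natDegree_X_le
  | more n ih₀ ih₁ =>
    rw [dickson_add_two]
    have left : (X * dickson k a (n + 1)).natDegree ≤ 1 + (n + 1) :=
      natDegree_mul_le_of_le natDegree_X_le ih₁
    have right : (C a * dickson k a n).natDegree ≤ n := (natDegree_C_mul_le _ _).trans ih₀
    exact (natDegree_sub_le_of_le left right).trans (by omega)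

theorem coeff_dickson_succ_self (k n : ℕ) : (dickson k a (n + 1)).coeff (n + 1) = 1 := by
  induction n with
  | zero => simp
  | succ n ih =>
    have lower : (dickson k a n).coeff (n + 2) = 0 :=
      coeff_eq_zero_of_natDegree_lt ((natDegree_dickson_le a k n).trans_lt (by omega))
    rw [dickson_add_two, coeff_sub, coeff_X_mul, ih, coeff_C_mul, lower, mul_zero, sub_zero]

/-- The monic Dickson polynomials of the first kind: the Dickson polynomials `dickson 1 a i`, except
that the constant polynomial `dickson 1 a 0 = 2` is replaced by `1`. -/
noncomputable def monicDickson : ℕ → R[X]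
  | 0 => 1
  | i + 1 => dickson 1 a (i + 1)

theorem monic_monicDickson : ∀ i, (monicDickson a i).Monic
  | 0 => monic_one
  | i + 1 => monic_of_natDegree_le_of_coeff_eq_one _ (natDegree_dickson_le a 1 (i + 1))
      (coeff_dickson_succ_self a 1 i)

theorem natDegree_monicDickson [Nontrivial R] : ∀ i, (monicDickson a i).natDegree = i
  | 0 => natDegree_one
  | i + 1 => natDegree_eq_of_le_of_coeff_ne_zero (natDegree_dickson_le a 1 (i + 1))
      ((coeff_dickson_succ_self a 1 i).trans_ne one_ne_zero)

end Dickson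

section ConstantTerm

open LaurentPolynomial (T)

variable {R : Type*} [CommRing R] (a b : R)

/-- The linear functional sending a polynomial `f` to the constant term of the Laurent polynomial
`f (z + a / z)`. -/
noncomputable def constantTerm : R[X] →ₗ[R] R :=
  Finsupp.lapply 0 ∘ₗ (AddMonoidAlgebra.coeffLinearEquiv R).toLinearMap ∘ₗ
    (aeval (T 1 + LaurentPolynomial.C a * T (-1))).toLinearMap

theorem constantTerm_apply (f : R[X]) :
    constantTerm a f = (aeval (T 1 + LaurentPolynomial.C a * T (-1)) f).coeff 0 :=
  rfl

theorem constantTerm_one : constantTerm a 1 = 1 := by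
  rw [constantTerm_apply, map_one, ← LaurentPolynomial.T_zero, LaurentPolynomial.T_apply,
    if_pos rfl]

theorem constantTerm_dickson_one_succ (n : ℕ) : constantTerm a (dickson 1 a (n + 1)) = 0 := by
  have mul_eq : T 1 * (LaurentPolynomial.C a * T (-1)) = algebraMap R (LaurentPolynomial R) a := by
    rw [mul_left_comm, ← LaurentPolynomial.T_add, add_neg_cancel, LaurentPolynomial.T_zero,
      mul_one, LaurentPolynomial.algebraMap_apply, Algebra.algebraMap_self, RingHom.id_apply]
  rw [constantTerm_apply, aeval_add_dickson_one a mul_eq, mul_pow, ← map_pow,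
    LaurentPolynomial.T_pow, LaurentPolynomial.T_pow, ← LaurentPolynomial.single_eq_C_mul_T,
    AddMonoidAlgebra.coeff_add, Finsupp.add_apply, LaurentPolynomial.T_apply,
    AddMonoidAlgebra.coeff_single, Finsupp.single_apply, if_neg (by omega), if_neg (by omega),
    add_zero]

theorem constantTerm_dickson_two_add_two (n : ℕ) :
    constantTerm a (dickson 2 a (n + 2)) = a * constantTerm a (dickson 2 a n) := by
  have h := constantTerm_dickson_one_succ a (n + 1)
  rwa [dickson_one_add_two_eq_sub, ← smul_eq_C_mul, map_sub, map_smul, smul_eq_mul,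
    sub_eq_zero] at h

theorem constantTerm_dickson_two_two_mul_add (i d : ℕ) :
    constantTerm a (dickson 2 a (2 * i + d)) = a ^ i * constantTerm a (dickson 2 a d) := by
  induction i with
  | zero => simp
  | succ i ih =>
    rw [show 2 * (i + 1) + d = 2 * i + d + 2 by ring, constantTerm_dickson_two_add_two, ih]
    ring

theorem constantTerm_dickson_two_even (k : ℕ) :
    constantTerm a (dickson 2 a (2 * k)) = a ^ k := by
  have dickson_two_zero_eq : dickson 2 a 0 = 1 := by rw [dickson_zero]; norm_num
  simpa [dickson_two_zero_eq, constantTerm_one] using constantTerm_dickson_two_two_mul_add a k 0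

theorem constantTerm_dickson_two_odd (k : ℕ) :
    constantTerm a (dickson 2 a (2 * k + 1)) = 0 := by
  have h : constantTerm a (dickson 2 a 1) = 0 := constantTerm_dickson_one_succ a 0
  rw [constantTerm_dickson_two_two_mul_add, h, mul_zero]

theorem coeff_zero_toLaurent_mul_T_neg (f : R[X]) (n : ℕ) :
    (toLaurent f * T (-n : ℤ)).coeff 0 = f.coeff n := by
  rw [T, AddMonoidAlgebra.coeff_mul_single_eq_coeff_mul (n : ℤ) (by omega), mul_one,
    LaurentPolynomial.coeff_toLaurent]
  exact Finsupp.mapDomain_apply Nat.castEmbedding.injective _ _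

/-- The central trinomial coefficient: the coefficient of `X ^ n` in `(X ^ 2 + b * X + a) ^ n`. -/
noncomputable def centralTrinomial (n : ℕ) : R :=
  ((X ^ 2 + C b * X + C a) ^ n).coeff n

theorem constantTerm_X_add_C_pow (n : ℕ) :
    constantTerm a ((X + C b) ^ n) = centralTrinomial a b n := by
  have aeval_eq : aeval (T 1 + LaurentPolynomial.C a * T (-1)) (X + C b) =
      toLaurent (X ^ 2 + C b * X + C a) * T (-1) := by
    have T_mul_T : T 1 * T (-1) = (1 : LaurentPolynomial R) := by
      rw [← LaurentPolynomial.T_add, add_neg_cancel, LaurentPolynomial.T_zero]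
    simp only [map_add, map_mul, map_pow, aeval_X, aeval_C, toLaurent_X, toLaurent_C,
      LaurentPolynomial.algebraMap_apply, Algebra.algebraMap_self, RingHom.id_apply]
    linear_combination (-T 1 - LaurentPolynomial.C b) * T_mul_T
  rw [constantTerm_apply, map_pow, aeval_eq, mul_pow, ← map_pow, LaurentPolynomial.T_pow,
    mul_neg_one, coeff_zero_toLaurent_mul_T_neg, centralTrinomial]

theorem delannoy_eq_centralTrinomial (n : ℕ) : delannoy n = centralTrinomial 2 3 n := by
  have factor : (X ^ 2 + C 3 * X + C 2 : ℚ[X]) = (1 + X) * ((1 + X) + 1) := by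
    simp only [map_ofNat]
    ring
  rw [centralTrinomial, factor, mul_pow, add_pow (1 + X) (1 : ℚ[X]) n, Finset.mul_sum,
    finsetSum_coeff, delannoy]
  refine Finset.sum_congr rfl fun k _ => ?_
  rw [one_pow, mul_one, ← mul_assoc, ← pow_add, coeff_mul_natCast, coeff_one_add_X_pow, mul_comm,
    ← Nat.choose_symm_add]

end ConstantTerm

section WronskianForm

variable {R : Type*} [CommRing R] (a b : R)

/-- The alternating bilinear form `(f, g) ↦ L (f * g' - f' * g)`, where `L` is the functional
`constantTerm a`. -/
noncomputable def wronskianForm : R[X] →ₗ[R] R[X] →ₗ[R] R :=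
  (wronskianBilin R).compr₂ (constantTerm a)

theorem wronskianForm_apply (f g : R[X]) :
    wronskianForm a f g = constantTerm a (wronskian f g) :=
  rfl

theorem wronskianForm_swap (f g : R[X]) : wronskianForm a g f = -wronskianForm a f g := by
  rw [wronskianForm_apply, wronskianForm_apply, ← wronskian_neg_eq, map_neg]

theorem wronskian_pow_pow (p : R[X]) (i j : ℕ) :
    wronskian (p ^ i) (p ^ j) = ((j : R[X]) - i) * p ^ (i + j - 1) * derivative p := by
  rw [wronskian, derivative_pow, derivative_pow, map_natCast, map_natCast]
  rcases i with _ | i <;> rcases j with _ | j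
  · simp
  · simp
  · simp only [Nat.cast_zero, zero_tsub, pow_zero, mul_one, zero_mul, mul_zero, Nat.cast_add,
      Nat.cast_one, add_tsub_cancel_right, zero_sub, neg_add_rev, add_zero]
    ring
  · rw [show i + 1 + (j + 1) - 1 = i + j + 1 by omega, Nat.add_sub_cancel, Nat.add_sub_cancel]
    push_cast
    ring

theorem wronskianForm_X_add_C_pow (i j : ℕ) :
    wronskianForm a ((X + C b) ^ i) ((X + C b) ^ j) =
      ((j : R) - i) * centralTrinomial a b (i + j - 1) := by
  have wronskian_eq : wronskian ((X + C b) ^ i) ((X + C b) ^ j) =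
      ((j : R) - i) • (X + C b) ^ (i + j - 1) := by
    rw [wronskian_pow_pow, derivative_X_add_C, mul_one, smul_eq_C_mul, C_sub, map_natCast,
      map_natCast]
  rw [wronskianForm_apply, wronskian_eq, map_smul, constantTerm_X_add_C_pow, smul_eq_mul]

theorem wronskianForm_monicDickson_add (i d : ℕ) :
    wronskianForm a (monicDickson a i) (monicDickson a (i + d + 1)) =
      (if i = 0 then 1 else 2) * a ^ i * (i + d + 1) * constantTerm a (dickson 2 a d) := by
  rw [wronskianForm_apply]
  cases i with
  | zero =>
    rw [monicDickson, monicDickson, wronskian, derivative_one, zero_mul, one_mul, sub_zero,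
      derivative_dickson_one_succ, map_nsmul]
    simp
  | succ i =>
    rw [monicDickson, monicDickson, wronskian_dickson_one, map_add, map_nsmul, map_nsmul, map_smul,
      constantTerm_dickson_two_two_mul_add, if_neg i.succ_ne_zero]
    simp only [nsmul_eq_mul, Nat.cast_add, Nat.cast_one, smul_eq_mul, Nat.cast_mul, Nat.cast_ofNat]
    ring

theorem wronskianForm_monicDickson_of_even_add (i j : ℕ) (h : Even (i + j)) :
    wronskianForm a (monicDickson a i) (monicDickson a j) = 0 := by
  wlog hij : i ≤ j generalizing i j
  · rw [wronskianForm_swap, this j i (by rwa [add_comm]) (by omega), neg_zero]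
  obtain rfl | hlt := hij.eq_or_lt
  · rw [wronskianForm_apply, wronskian_self_eq_zero, map_zero]
  · obtain ⟨k, rfl⟩ : ∃ k, j = i + (2 * k + 1) + 1 := by
      obtain ⟨m, hm⟩ := h
      exact ⟨m - i - 1, by omega⟩
    rw [wronskianForm_monicDickson_add, constantTerm_dickson_two_odd, mul_zero]

theorem wronskianForm_monicDickson_even_odd (p q : ℕ) :
    wronskianForm a (monicDickson a (2 * p)) (monicDickson a (2 * q + 1)) =
      (if p = 0 then 1 else 2) * a ^ p * (a ^ q * if p ≤ q then 2 * (q : R) + 1 else -(2 * p)) := by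
  obtain hpq | hqp := le_or_gt p q
  · obtain ⟨k, rfl⟩ := Nat.exists_eq_add_of_le hpq
    rw [if_pos hpq, show 2 * (p + k) + 1 = 2 * p + 2 * k + 1 by ring,
      wronskianForm_monicDickson_add, constantTerm_dickson_two_even]
    simp only [mul_eq_zero, OfNat.ofNat_ne_zero, false_or]
    push_cast
    ring
  · obtain ⟨k, rfl⟩ := Nat.exists_eq_add_of_lt hqp
    rw [if_neg hqp.not_ge, if_neg (by omega), wronskianForm_swap,
      show 2 * (q + k + 1) = 2 * q + 1 + 2 * k + 1 by ring, wronskianForm_monicDickson_add,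
      constantTerm_dickson_two_even, if_neg (by omega)]
    push_cast
    ring

theorem prod_even_odd_weights (n : ℕ) :
    (∏ p ∈ Finset.range (n + 1), (if p = 0 then 1 else 2) * a ^ p) *
      ∏ q ∈ Finset.range (n + 1), a ^ q = 2 ^ n * a ^ ((n + 1) * n) := by
  rw [Finset.prod_mul_distrib, mul_assoc, Finset.prod_pow_eq_pow_sum, ← sq, ← pow_mul,
    Finset.sum_range_id_mul_two, Finset.prod_range_succ']
  simp

theorem det_wronskianForm_monicDickson_even_odd (n : ℕ) :
    (Matrix.of fun p q : Fin (n + 1) =>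
        wronskianForm a (monicDickson a (2 * p)) (monicDickson a (2 * q + 1))).det =
      2 ^ n * a ^ ((n + 1) * n) * ((∏ k ∈ Finset.range n, (4 * (k : R) + 3)) * (2 * n + 1)) := by
  set K : Matrix (Fin (n + 1)) (Fin (n + 1)) R :=
    Matrix.of fun p q => if p ≤ q then 2 * (q.val : R) + 1 else -(2 * p.val)
  have det_K : K.det = (∏ k ∈ Finset.range n, (4 * (k : R) + 3)) * (2 * n + 1) := by
    rw [det_of_ite_le (fun q => 2 * (q : R) + 1) (fun p => -(2 * (p : R))) n]
    congr! 2 with k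
    push_cast
    ring
  calc _ = (Matrix.of fun p q : Fin (n + 1) => ((if p.val = 0 then 1 else 2) * a ^ p.val) *
        (Matrix.of fun p q : Fin (n + 1) => a ^ q.val * K p q) p q).det := by
        simp only [wronskianForm_monicDickson_even_odd, K, Matrix.of_apply, Fin.le_def]
    _ = ((∏ p : Fin (n + 1), (if p.val = 0 then 1 else 2) * a ^ p.val) *
        ∏ q : Fin (n + 1), a ^ q.val) * K.det := by
        rw [Matrix.det_mul_column (fun p : Fin (n + 1) => (if p.val = 0 then 1 else 2) * a ^ p.val),
          Matrix.det_mul_row (fun q : Fin (n + 1) => a ^ q.val), mul_assoc]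
    _ = _ := by
        rw [Fin.prod_univ_eq_prod_range (fun p => (if p = 0 then 1 else 2) * a ^ p),
          Fin.prod_univ_eq_prod_range (fun q => a ^ q), prod_even_odd_weights, det_K]

end WronskianForm

theorem det_delannoy_general {R : Type*} [CommRing R] (a b : R) (n : ℕ) (hn : 1 ≤ n) :
    (Matrix.of fun i j : Fin (2 * n) =>
        ((j.val : R) - (i.val : R)) * centralTrinomial a b (i.val + j.val - 1)).det =
      (2 ^ (n - 1) * a ^ (n * (n - 1)) * (2 * (n : R) - 1) *
        ∏ k ∈ Finset.Icc 1 (n - 1), (4 * (k : R) - 1)) ^ 2 := by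
  nontriviality R
  obtain ⟨m, rfl⟩ := Nat.exists_eq_add_of_le' hn
  have prod_Icc : ∏ k ∈ Finset.Icc 1 m, (4 * (k : R) - 1) =
      ∏ k ∈ Finset.range m, (4 * (k : R) + 3) := by
    rw [← Finset.Ico_add_one_right_eq_Icc, Finset.prod_Ico_eq_prod_range]
    refine Finset.prod_congr rfl fun k _ => ?_
    push_cast
    ring
  simp only [← wronskianForm_X_add_C_pow]
  rw [det_bilin_eq_det_bilin_X_pow (wronskianForm a) (fun i => (X + C b) ^ i)
      (fun i => natDegree_pow_X_add_C i b) (fun i => (monic_X_add_C b).pow i),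
    ← det_bilin_eq_det_bilin_X_pow (wronskianForm a) (monicDickson a) (natDegree_monicDickson a)
      (monic_monicDickson a),
    det_eq_sq_of_skew_of_eq_zero_of_even_add
      (fun i j => wronskianForm a (monicDickson a i) (monicDickson a j))
      (fun i j => wronskianForm_swap a _ _) (wronskianForm_monicDickson_of_even_add a),
    det_wronskianForm_monicDickson_even_odd, Nat.add_sub_cancel, prod_Icc]
  push_cast
  ring

/-- For every positive integer `n`, the determinant of the `2n × 2n` skew-symmetric
matrix with entries `(j-i)·D_{i+j-3}` (1-based; here 0-based, so the entry at
`(i,j)` is `(j-i)·D_{i+j-1}`, the `(0,0)` entry being `0`) equals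
`(2^{(n+1)(n-1)}·(2n-1)·∏_{k=1}^{n-1} (4k-1))²`. -/
theorem det_delannoy (n : ℕ) (hn : 1 ≤ n) :
    (Matrix.of fun i j : Fin (2 * n) =>
        ((j.val : ℚ) - (i.val : ℚ)) * delannoy (i.val + j.val - 1)).det =
      (2 ^ ((n + 1) * (n - 1)) * (2 * (n : ℚ) - 1) *
        ∏ k ∈ Finset.Icc 1 (n - 1), (4 * (k : ℚ) - 1)) ^ 2 := by
  rw [show (n + 1) * (n - 1) = n - 1 + n * (n - 1) by ring, pow_add]
  simpa only [delannoy_eq_centralTrinomial] using det_delannoy_general (2 : ℚ) 3 n hn
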